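/- Let n ≥ 1, let B = {x ∈ ℝⁿ : |x| < 1} be the open Euclidean unit ball and S = {x ∈ ℝⁿ : |x| = 1} its boundary sphere. Let f : closure(B) → ℝⁿ be continuous and let ε ∈ (0,1) be such that |f(x) − x| ≤ ε for all x ∈ S. Then (1−ε)·B ⊆ f(closure(B)), i.e., every y ∈ ℝⁿ with |y| < 1 − ε is of the form y = f(x) for some x in the closed unit ball. -/

import Mathlib

/-! Let `g` be a Lipschitz map vanishing outside a ball. For small `t > 0` the map `x ↦ x + t g(x)`
permutes the ball, so by change of variables the integral of `det (1 + t Dg)` over it equals its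
volume. This integral is a polynomial in `t`, so the equality persists at `t = 1` (an argument of
Milnor and Rogers). A `C¹` retraction `x + g(x)` onto the sphere has singular derivative and would
make the integral vanish; hence none exists, and a continuous self-map of a finite-dimensional
space equal to the identity near infinity is surjective.

If `|f x - x| ≤ ε` on the sphere of radius `R` and `|y| < R - ε`, then `y` lies on no segment
`[x, f x]` with `x` in the sphere. So `f` can be deformed along these segments to a map that is the
identity outside the ball while leaving it unchanged at every `x` with `y ∈ [x, f x]`, and a
preimage of `y` under the deformed map is a preimage under `f`. -/

open MeasureTheory Metric Set Module Filter Topology Polynomial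
open scoped NNReal

theorem integral_eval_eq_of_infinite {α 𝕜 : Type*} [MeasurableSpace α] [RCLike 𝕜] {μ : Measure α}
    {P : α → 𝕜[X]} {d : ℕ} (hdeg : ∀ x, (P x).natDegree ≤ d) {T : Set 𝕜} (hT : T.Infinite) {C : 𝕜}
    (hint : ∀ t ∈ T, Integrable (fun x ↦ (P x).eval t) μ)
    (hC : ∀ t ∈ T, ∫ x, (P x).eval t ∂μ = C) (a : 𝕜) : ∫ x, (P x).eval a ∂μ = C := by
  obtain ⟨s, hsT, hcard⟩ := hT.exists_subset_card_eq (d + 1)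
  let c : 𝕜 → 𝕜 := fun t ↦ (Lagrange.basis s id t).eval a
  have eval_eq (x : α) : (P x).eval a = ∑ t ∈ s, c t * (P x).eval t := by
    have hlt : (P x).degree < s.card := by
      rw [hcard]
      exact degree_le_natDegree.trans_lt (by exact_mod_cast Nat.lt_succ_of_le (hdeg x))
    conv_lhs => rw [Lagrange.eq_interpolate (v := id) (injOn_id _) hlt]
    simp [Lagrange.interpolate_apply, eval_finsetSum, c, mul_comm]
  have sum_eq_one : ∑ t ∈ s, c t = 1 := by
    have hs : s.Nonempty := Finset.card_pos.1 (by lia)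
    rw [← eval_finsetSum, Lagrange.sum_basis (injOn_id _) hs, eval_one]
  calc ∫ x, (P x).eval a ∂μ = ∑ t ∈ s, c t * ∫ x, (P x).eval t ∂μ := by
        simp_rw [eval_eq]
        rw [integral_finsetSum s fun t ht ↦ (hint t (hsT ht)).const_mul (c t)]
        simp_rw [integral_const_mul]
    _ = ∑ t ∈ s, c t * C := Finset.sum_congr rfl fun t ht ↦ by rw [hC t (hsT ht)]
    _ = C := by rw [← Finset.sum_mul, sum_eq_one, one_mul]

theorem eval_reverse_charpoly_neg {R M : Type*} [CommRing R] [AddCommGroup M] [Module R M]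
    [Module.Free R M] [Module.Finite R M] (A : M →ₗ[R] M) (t : R) :
    (-A).charpoly.reverse.eval t = LinearMap.det (1 + t • A) := by
  let b := Free.chooseBasis R M
  rw [← LinearMap.charpoly_toMatrix (-A) b, Matrix.reverse_charpoly, Matrix.charpolyRev,
    ← LinearMap.det_toMatrix b, ← coe_evalRingHom, RingHom.map_det]
  congr 1
  ext i j
  simp [LinearMap.toMatrix_one, Matrix.one_apply, apply_ite (eval t), mul_comm t]

theorem image_eq_self_of_bijective {α : Type*} {F : α → α} {s : Set α} (hF : Function.Bijective F)
    (hs : ∀ x ∉ s, F x = x) : F '' s = s := by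
  have : F '' sᶜ = sᶜ := (image_congr hs).trans (image_id' _)
  rw [← compl_inj_iff, ← image_compl_eq hF, this]

section NormedSpace

variable {E : Type*} [NormedAddCommGroup E]

theorem bijective_id_add_of_lipschitzWith_lt_one [CompleteSpace E] {g : E → E} {K : ℝ≥0}
    (hg : LipschitzWith K g) (hK : K < 1) : Function.Bijective fun x ↦ x + g x := by
  refine Function.bijective_iff_existsUnique _ |>.2 fun y ↦ ?_
  have hcontr : ContractingWith K fun x ↦ y - g x :=
    ⟨hK, by simpa using (LipschitzWith.const y).sub hg⟩
  exact ⟨hcontr.fixedPoint, (eq_sub_iff_add_eq.1 hcontr.fixedPoint_isFixedPt.symm),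
    fun x hx ↦ hcontr.fixedPoint_unique (eq_sub_of_add_eq hx).symm⟩

variable [NormedSpace ℝ E] [FiniteDimensional ℝ E]

theorem det_one_add_pos_of_norm_lt_one {A : E →L[ℝ] E} (hA : ‖A‖ < 1) : 0 < (1 + A).det := by
  have := FiniteDimensional.complete ℝ E
  have hcont : ContinuousOn (fun t : ℝ ↦ (1 + t • A).det) (Icc 0 1) :=
    (ContinuousLinearMap.continuous_det.comp (by fun_prop)).continuousOn
  have det_ne_zero : ∀ t ∈ Icc (0 : ℝ) 1, (1 + t • A).det ≠ 0 := fun t ht ↦ by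
    have hnorm : ‖-(t • A)‖ < 1 := by
      rw [norm_neg, norm_smul, Real.norm_of_nonneg ht.1]
      exact (mul_le_of_le_one_left (norm_nonneg _) ht.2).trans_lt hA
    have hunit : IsUnit (1 + t • A) := by simpa using isUnit_one_sub_of_norm_lt_one hnorm
    exact (LinearMap.isUnit_det _ (hunit.map ContinuousLinearMap.toLinearMapRingHom)).ne_zero
  by_contra! hneg
  obtain ⟨t, ht, hzero⟩ := intermediate_value_Icc' zero_le_one hcont
    ⟨by simpa using hneg, by simp [ContinuousLinearMap.det]⟩
  exact det_ne_zero t ht hzero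

section ChangeOfVariables

variable [MeasurableSpace E] [BorelSpace E] (μ : Measure E) [μ.IsAddHaarMeasure]
  {U : Set E} {g : E → E} {g' : E → E →L[ℝ] E} {K : ℝ≥0}

theorem integrableOn_det_one_add_and_setIntegral_eq_of_lt_one (hU : MeasurableSet U)
    (hμU : μ U ≠ ⊤) (hg : LipschitzWith K g) (hK : K < 1) (hg_zero : ∀ x ∉ U, g x = 0)
    (hg' : ∀ x ∈ U, HasFDerivAt g (g' x) x) :
    IntegrableOn (fun x ↦ (1 + g' x).det) U μ ∧ ∫ x in U, (1 + g' x).det ∂μ = μ.real U := by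
  have := FiniteDimensional.complete ℝ E
  have hbij := bijective_id_add_of_lipschitzWith_lt_one hg hK
  have himage : (fun x ↦ x + g x) '' U = U :=
    image_eq_self_of_bijective hbij fun x hx ↦ by simp [hg_zero x hx]
  have hderiv : ∀ x ∈ U, HasFDerivWithinAt (fun x ↦ x + g x) (1 + g' x) U x :=
    fun x hx ↦ ((hasFDerivAt_id x).add (hg' x hx)).hasFDerivWithinAt
  have habs : EqOn (fun x ↦ |(1 + g' x).det| • (1 : ℝ)) (fun x ↦ (1 + g' x).det) U := fun x hx ↦ by
    have hnorm : ‖g' x‖ < 1 := ((hg' x hx).le_of_lipschitz hg).trans_lt (by exact_mod_cast hK)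
    simp [abs_of_pos (det_one_add_pos_of_norm_lt_one hnorm)]
  constructor
  · rw [← integrableOn_congr_fun habs hU, ← integrableOn_image_iff_integrableOn_abs_det_fderiv_smul
      μ hU hderiv hbij.injective.injOn fun _ ↦ (1 : ℝ), himage]
    exact integrableOn_const hμU
  · rw [← setIntegral_congr_fun hU habs, ← integral_image_eq_integral_abs_det_fderiv_smul
      μ hU hderiv hbij.injective.injOn fun _ ↦ (1 : ℝ), himage]
    simp

theorem setIntegral_det_one_add_eq_measureReal (hU : MeasurableSet U)
    (hμU : μ U ≠ ⊤) (hg : LipschitzWith K g) (hg_zero : ∀ x ∉ U, g x = 0)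
    (hg' : ∀ x ∈ U, HasFDerivAt g (g' x) x) : ∫ x in U, (1 + g' x).det ∂μ = μ.real U := by
  have hsmall : ∀ t ∈ Ioo 0 (1 / (K + 1) : ℝ), IntegrableOn (fun x ↦ (1 + t • g' x).det) U μ ∧
      ∫ x in U, (1 + t • g' x).det ∂μ = μ.real U := fun t ht ↦ by
    have hlt : ‖t‖₊ * K < 1 := by
      rw [← NNReal.coe_lt_coe, NNReal.coe_mul, coe_nnnorm, Real.norm_of_nonneg ht.1.le]
      have := (lt_div_iff₀ (by positivity)).1 ht.2
      push_cast
      linarith [ht.1]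
    exact integrableOn_det_one_add_and_setIntegral_eq_of_lt_one μ hU hμU
      ((lipschitzWith_smul t).comp hg) hlt (fun x hx ↦ by simp [hg_zero x hx])
      fun x hx ↦ (hg' x hx).const_smul t
  let P : E → ℝ[X] := fun x ↦ (-(g' x : E →ₗ[ℝ] E)).charpoly.reverse
  have hP (x : E) (t : ℝ) : (P x).eval t = (1 + t • g' x).det := eval_reverse_charpoly_neg _ _
  have hdeg (x : E) : (P x).natDegree ≤ finrank ℝ E :=
    (reverse_natDegree_le _).trans (LinearMap.charpoly_natDegree _).le
  have hpos : (0 : ℝ) < 1 / (K + 1) := by positivity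
  simpa only [hP, one_smul] using integral_eval_eq_of_infinite hdeg (Ioo_infinite hpos)
    (fun t ht ↦ by simpa only [hP] using (hsmall t ht).1.integrable)
    (fun t ht ↦ by simpa only [hP] using (hsmall t ht).2) 1

end ChangeOfVariables

end NormedSpace

theorem exists_mem_segment_mem_frontier {E : Type*} [AddCommGroup E] [Module ℝ E]
    [TopologicalSpace E] [ContinuousAdd E] [ContinuousSMul ℝ E]
    {s : Set E} {x y : E} (hx : x ∈ s) (hy : y ∉ s) : ∃ z ∈ segment ℝ x y, z ∈ frontier s := by
  by_contra! h
  have hcover : segment ℝ x y ⊆ interior s ∪ (closure s)ᶜ := fun z hz ↦ by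
    by_contra hz'
    simp only [mem_union, mem_compl_iff, not_or, not_not] at hz'
    exact h z hz ⟨hz'.2, hz'.1⟩
  obtain ⟨z, -, hz_int, hz_cl⟩ := (convex_segment x y).isPreconnected _ _ isOpen_interior
    isClosed_closure.isOpen_compl hcover
    ⟨x, left_mem_segment ℝ x y, (hcover (left_mem_segment ℝ x y)).resolve_right
      (not_not.2 (subset_closure hx))⟩
    ⟨y, right_mem_segment ℝ x y, (hcover (right_mem_segment ℝ x y)).resolve_left
      fun h ↦ hy (interior_subset h)⟩
  exact hz_cl (interior_subset_closure hz_int)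

theorem lipschitzWith_indicator_of_forall_frontier_eq_zero {E F : Type*} [SeminormedAddCommGroup E]
    [NormedSpace ℝ E] [SeminormedAddCommGroup F] {s : Set E} {g : E → F} {K : ℝ≥0}
    (hs : IsClosed s) (hg : LipschitzOnWith K g s) (hzero : ∀ x ∈ frontier s, g x = 0) :
    LipschitzWith K (s.indicator g) := by
  have norm_le_of_notMem {x y : E} (hx : x ∈ s) (hy : y ∉ s) : ‖g x‖ ≤ K * dist x y := by
    obtain ⟨z, hz, hz_front⟩ := exists_mem_segment_mem_frontier hx hy
    calc ‖g x‖ = dist (g x) (g z) := by rw [hzero z hz_front, dist_zero_right]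
      _ ≤ K * dist x z := hg.dist_le_mul x hx z (hs.frontier_subset hz_front)
      _ ≤ K * dist x y := by
        gcongr
        linarith [dist_add_dist_of_mem_segment hz, dist_nonneg (x := z) (y := y)]
  refine LipschitzWith.of_dist_le_mul fun x y ↦ ?_
  by_cases hx : x ∈ s <;> by_cases hy : y ∈ s
  · simpa [hx, hy] using hg.dist_le_mul x hx y hy
  · simpa [hx, hy] using norm_le_of_notMem hx hy
  · simpa [hx, hy, dist_comm] using norm_le_of_notMem hy hx
  · rw [indicator_of_notMem hx, indicator_of_notMem hy, dist_self]
    positivity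

section InnerProductSpace

variable {E : Type*} [NormedAddCommGroup E] [InnerProductSpace ℝ E] [FiniteDimensional ℝ E]

theorem det_eq_zero_of_norm_eventuallyEq_const {F : E → E} {F' : E →L[ℝ] E} {x : E} {R : ℝ}
    (hF : HasFDerivAt F F' x) (hR : R ≠ 0) (hnorm : ∀ᶠ z in 𝓝 x, ‖F z‖ = R) : F'.det = 0 := by
  by_contra hdet
  obtain ⟨v, hv⟩ := ((F' : E →ₗ[ℝ] E).equivOfDetNeZero hdet).surjective (F x)
  have hconst : HasFDerivAt (fun z ↦ ‖F z‖ ^ 2) (0 : E →L[ℝ] ℝ) x :=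
    (hasFDerivAt_const (R ^ 2) x).congr_of_eventuallyEq (hnorm.mono fun z hz ↦ by simp [hz])
  have horth : inner ℝ (F x) (F' v) = 0 := by
    simpa using DFunLike.congr_fun (hF.norm_sq.unique hconst) v
  have hv : F' v = F x := hv
  rw [hv, real_inner_self_eq_norm_sq, hnorm.self_of_nhds] at horth
  exact hR (pow_eq_zero_iff two_ne_zero |>.1 horth)

theorem not_mapsTo_ball_sphere_of_contDiffOn {r : E → E} {R : ℝ} (hR : 0 < R)
    (hr : ContDiffOn ℝ 1 r (closedBall 0 R)) (hr_id : ∀ x ∈ sphere 0 R, r x = x) :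
    ¬ MapsTo r (ball 0 R) (sphere 0 R) := by
  intro hmaps
  borelize E
  let μ : Measure E := Measure.addHaar
  let g : E → E := (closedBall 0 R).indicator (r - id)
  obtain ⟨K, hK⟩ := (hr.sub contDiffOn_id).exists_lipschitzOnWith one_ne_zero
    (convex_closedBall 0 R) (isCompact_closedBall 0 R)
  have hg : LipschitzWith K g := lipschitzWith_indicator_of_forall_frontier_eq_zero
    isClosed_closedBall hK fun x hx ↦
      sub_eq_zero.2 (hr_id x (frontier_closedBall_subset_sphere hx))
  have hg_zero : ∀ x ∉ ball 0 R, g x = 0 := fun x hx ↦ indicator_apply_eq_zero.2 fun hx' ↦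
    sub_eq_zero.2 (hr_id x (le_antisymm hx' (not_lt.1 hx)))
  have hr' : ∀ x ∈ ball 0 R, HasFDerivAt r (fderiv ℝ r x) x := fun x hx ↦
    ((hr.differentiableOn one_ne_zero).differentiableAt
      (closedBall_mem_nhds_of_mem hx)).hasFDerivAt
  have hg' : ∀ x ∈ ball 0 R, HasFDerivAt g (fderiv ℝ r x - 1) x := fun x hx ↦
    ((hr' x hx).sub (hasFDerivAt_id x)).congr_of_eventuallyEq
      (eqOn_indicator.eventuallyEq_of_mem (closedBall_mem_nhds_of_mem hx))
  have hdet : ∀ x ∈ ball 0 R, (1 + (fderiv ℝ r x - 1)).det = 0 := fun x hx ↦ by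
    rw [add_sub_cancel]
    refine det_eq_zero_of_norm_eventuallyEq_const (hr' x hx) hR.ne' ?_
    filter_upwards [isOpen_ball.mem_nhds hx] with z hz using mem_sphere_zero_iff_norm.1 (hmaps hz)
  have hvol : μ.real (ball 0 R) = 0 := by
    rw [← setIntegral_det_one_add_eq_measureReal μ measurableSet_ball measure_ball_lt_top.ne hg
      hg_zero hg', setIntegral_congr_fun measurableSet_ball hdet, integral_zero]
  exact (ENNReal.toReal_pos (measure_ball_pos μ 0 hR).ne' measure_ball_lt_top.ne).ne' hvol

theorem exists_eq_zero_of_contDiff_of_eq_id_outside_ball {F : E → E} {R : ℝ} (hR : 0 < R)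
    (hF : ContDiff ℝ 1 F) (hF_id : ∀ x, R ≤ ‖x‖ → F x = x) : ∃ x, F x = 0 := by
  by_contra! hne
  have hr : ContDiff ℝ 1 fun x ↦ (R / ‖F x‖) • F x :=
    (contDiff_const.div (hF.norm ℝ hne) fun x ↦ norm_ne_zero_iff.2 (hne x)).smul hF
  refine not_mapsTo_ball_sphere_of_contDiffOn hR hr.contDiffOn (fun x hx ↦ ?_) fun x _ ↦ ?_
  · have hx : ‖x‖ = R := by simpa using hx
    simp [hF_id x hx.ge, hx, hR.ne']
  · simp [norm_smul, abs_of_pos hR, hne x]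

theorem exists_eq_zero_of_continuous_of_eventuallyEq_id {F : E → E} (hF : Continuous F)
    (hF_id : F =ᶠ[cocompact E] id) : ∃ x, F x = 0 := by
  obtain ⟨x₀, hx₀⟩ : ∃ x₀, ∀ x, ‖F x₀‖ ≤ ‖F x‖ := hF.norm.exists_forall_le <|
    (tendsto_norm_cocompact_atTop (E := E)).congr' (hF_id.mono fun x hx ↦ by simp [hx])
  by_contra! hne
  obtain ⟨R, hR, hFR⟩ : ∃ R > 0, ∀ x, R ≤ ‖x‖ → F x = x := by
    rw [← cobounded_eq_cocompact] at hF_id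
    obtain ⟨R, -, hR⟩ := hasBasis_cobounded_norm.eventually_iff.1 hF_id
    exact ⟨max R 1, by positivity, fun x hx ↦ hR ((le_max_left _ _).trans hx)⟩
  obtain ⟨ψ, hψ, hψF, hψ_supp⟩ := (hF.sub continuous_id).exists_contDiff_approx 1
    (ε := fun _ ↦ ‖F x₀‖) continuous_const fun _ ↦ norm_pos_iff.2 (hne x₀)
  have hψ_zero (x : E) (hx : R ≤ ‖x‖) : ψ x = 0 := by
    by_contra h
    exact hψ_supp h (sub_eq_zero.2 (hFR x hx))
  obtain ⟨x, hx⟩ := exists_eq_zero_of_contDiff_of_eq_id_outside_ball hR (contDiff_id.add hψ)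
    fun x hx ↦ by simp [hψ_zero x hx]
  refine (hx₀ x).not_gt ?_
  have hx : ψ x = -x := eq_neg_of_add_eq_zero_right hx
  simpa [hx, dist_eq_norm', neg_add_eq_sub] using hψF x

end InnerProductSpace

theorem isCompact_setOf_mem_segment {X E : Type*} [TopologicalSpace X] [T2Space X]
    [AddCommGroup E] [Module ℝ E] [TopologicalSpace E] [IsTopologicalAddGroup E]
    [ContinuousSMul ℝ E] [T1Space E] {s : Set X} {f g : X → E} (hs : IsCompact s)
    (hf : ContinuousOn f s) (hg : ContinuousOn g s) (y : E) :
    IsCompact {x ∈ s | y ∈ segment ℝ (f x) (g x)} := by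
  let H : X × ℝ → E := fun p ↦ AffineMap.lineMap (f p.1) (g p.1) p.2
  have hH : ContinuousOn H (s ×ˢ Icc 0 1) :=
    (hf.comp continuousOn_fst fun p hp ↦ hp.1).lineMap
      (hg.comp continuousOn_fst fun p hp ↦ hp.1) continuousOn_snd
  have hcompact : IsCompact (s ×ˢ Icc (0 : ℝ) 1) := hs.prod isCompact_Icc
  convert (hcompact.of_isClosed_subset (hH.preimage_isClosed_of_isClosed hcompact.isClosed
    (isClosed_singleton (x := y))) inter_subset_left).image continuous_fst
  ext x
  simp [segment_eq_image_lineMap, H, and_assoc]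

section NormedSpace

variable {E : Type*} [NormedAddCommGroup E] [NormedSpace ℝ E] [FiniteDimensional ℝ E]

theorem surjective_of_continuous_of_eventuallyEq_id {F : E → E} (hF : Continuous F)
    (hF_id : F =ᶠ[cocompact E] id) : Function.Surjective F := by
  intro y
  let φ : E ≃ₜ EuclideanSpace ℝ (Fin (finrank ℝ E)) :=
    (Homeomorph.subRight y).trans (toEuclidean (E := E)).toHomeomorph
  have hφ : Tendsto φ.symm (cocompact _) (cocompact E) := φ.symm.isClosedEmbedding.tendsto_cocompact
  obtain ⟨z, hz⟩ := exists_eq_zero_of_continuous_of_eventuallyEq_id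
    (φ.continuous.comp (hF.comp φ.symm.continuous))
    ((hφ.eventually hF_id).mono fun z hz ↦ by simp [hz])
  have hy : φ y = 0 := by simp [φ]
  exact ⟨φ.symm z, φ.injective (hz.trans hy.symm)⟩

theorem mem_image_of_forall_frontier_notMem_segment {s : Set E} {f : E → E} {y : E}
    (hs : IsCompact s) (hf : ContinuousOn f s) (hy : y ∈ s)
    (hfront : ∀ x ∈ frontier s, y ∉ segment ℝ x (f x)) : y ∈ f '' s := by
  let Z : Set E := {x ∈ s | y ∈ segment ℝ x (f x)}
  have hdisj : Disjoint (closure sᶜ) Z := disjoint_left.2 fun x hx hxZ ↦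
    hfront x (frontier_eq_closure_inter_closure.ge ⟨subset_closure hxZ.1, hx⟩) hxZ.2
  obtain ⟨κ, hκ_zero, hκ_one, hκ⟩ := exists_continuous_zero_one_of_isClosed isClosed_closure
    (isCompact_setOf_mem_segment hs continuousOn_id hf y).isClosed hdisj
  let F : E → E := fun x ↦ AffineMap.lineMap x (f x) (κ x)
  have hF_id : EqOn F id (closure sᶜ) := fun x hx ↦ by simp [F, hκ_zero hx]
  have hF : Continuous F := by
    have hcover : s ∪ closure sᶜ = univ :=
      eq_univ_of_subset (union_subset_union_right s subset_closure) (union_compl_self s)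
    rw [← continuousOn_univ, ← hcover]
    refine ContinuousOn.union_of_isClosed ?_ (continuousOn_id.congr hF_id) hs.isClosed
      isClosed_closure
    exact continuousOn_id.lineMap hf κ.continuous.continuousOn
  obtain ⟨x, hx⟩ := surjective_of_continuous_of_eventuallyEq_id hF
    (mem_of_superset hs.compl_mem_cocompact fun x hx ↦ hF_id (subset_closure hx)) y
  have hxs : x ∈ s := by
    by_contra hxs
    have hxy : x = y := (hF_id (subset_closure hxs)).symm.trans hx
    exact hxs (hxy ▸ hy)
  have hxZ : x ∈ Z := ⟨hxs, segment_eq_image_lineMap ℝ x (f x) ▸ ⟨κ x, hκ x, hx⟩⟩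
  exact ⟨x, hxs, by simpa [F, hκ_one hxZ] using hx⟩

theorem ball_subset_image_of_close_to_id_on_sphere_general {f : E → E} {c : E} {R ε : ℝ}
    (hf : ContinuousOn f (closedBall c R)) (hε : 0 ≤ ε)
    (hsphere : ∀ x ∈ sphere c R, dist (f x) x ≤ ε) :
    ball c (R - ε) ⊆ f '' closedBall c R := by
  intro y hy
  rw [mem_ball] at hy
  refine mem_image_of_forall_frontier_notMem_segment (isCompact_closedBall c R) hf
    (mem_closedBall.2 (by linarith)) fun x hx hyx ↦ ?_
  have hx : dist x c = R := frontier_closedBall_subset_sphere hx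
  have hyx : dist y x ≤ ε := by
    simpa [dist_comm] using (segment_subset_closedBall_left x (f x) hyx).trans
      (dist_comm x (f x) ▸ hsphere x hx)
  linarith [dist_triangle_left x c y]

end NormedSpace

/-- **Topological surjectivity lemma.**
If `f` is continuous on the closed unit ball of `ℝⁿ` and moves points of the unit
sphere by at most `ε < 1`, then the image of the closed unit ball under `f`
contains the open ball of radius `1 - ε`. -/
theorem ball_subset_image_of_close_to_id_on_sphere
    (n : ℕ) (hn : 1 ≤ n)
    (f : EuclideanSpace ℝ (Fin n) → EuclideanSpace ℝ (Fin n))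
    (hf : ContinuousOn f (Metric.closedBall 0 1))
    (ε : ℝ) (hε0 : 0 < ε) (hε1 : ε < 1)
    (hsphere : ∀ x : EuclideanSpace ℝ (Fin n), ‖x‖ = 1 → ‖f x - x‖ ≤ ε) :
    ∀ y : EuclideanSpace ℝ (Fin n), ‖y‖ < 1 - ε →
      ∃ x : EuclideanSpace ℝ (Fin n), ‖x‖ ≤ 1 ∧ f x = y := by
  intro y hy
  obtain ⟨x, hx, rfl⟩ := ball_subset_image_of_close_to_id_on_sphere_general hf hε0.le
    (fun x hx ↦ (dist_eq_norm (f x) x).trans_le (hsphere x (by simpa using hx))) (by simpa using hy)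
  exact ⟨x, by simpa using hx, rfl⟩
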